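/- Let 𝐫 = ((r_1,s_1),…,(r_v,s_v)) and 𝐭 = ((t_1,u_1),…,(t_w,u_w)) be vectors of pairs of integers with all s_i, u_j ≠ 0, such that (Q_{𝐫,𝐭}(q; n))_{n≥0} is a well-defined sequence. Then the following are equivalent: (i) there exists C(q) ∈ ℤ[q] ∖ {0} such that C(q)^n · Q_{𝐫,𝐭}(q; n) ∈ ℤ[q^{−1}, q] for every n ≥ 0; (ii) for all but finitely many positive integers b, the function Δ_b^{𝐫,𝐭} is non-negative on ℝ_{≥0}. -/

import Mathlib

open Polynomial
open scoped Classical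

noncomputable section

/-- The generalized Dwork map `D_b(α)`: the unique rational whose reduced denominator is
coprime to `b` and such that `b·D_b(α) − α ∈ {0, 1, …, b−1}`. -/
def dwork (b : ℕ) (α : ℚ) : ℚ :=
  if h : ∃ θ : ℚ, Nat.Coprime θ.den b ∧ ∃ k : ℤ, 0 ≤ k ∧ k < (b : ℤ) ∧ (b : ℚ) * θ - α = (k : ℚ)
  then h.choose else 0

/-- `α ∈ ℤ_{≤0}`. -/
def IsNonPosInt (α : ℚ) : Prop := ∃ m : ℤ, m ≤ 0 ∧ α = (m : ℚ)

/-- `α ∈ ℤ_{>0}`. -/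
def IsPosInt (α : ℚ) : Prop := ∃ m : ℤ, 0 < m ∧ α = (m : ℚ)

/-- `𝔫_α`. -/
def frakn (α : ℚ) : ℤ := if 0 ≤ α then α.num else |α.num| + 1

/-- `⟨x⟩`: the fractional part of `x` if `x ∉ ℤ`, and `1` if `x ∈ ℤ`. -/
def cangle (x : ℝ) : ℝ := if ∃ m : ℤ, x = (m : ℝ) then 1 else Int.fract x

/-- Christol order `x ⪯ y`. -/
def cle (x y : ℝ) : Prop := cangle x < cangle y ∨ (cangle x = cangle y ∧ y ≤ x)

/-- The step function `δ_b(r, s, ·)`. -/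
def qdelta (b : ℕ) (r s : ℤ) (x : ℝ) : ℤ :=
  if Int.gcd (s / (Nat.gcd (Int.gcd r s) b : ℤ)) (((b / Nat.gcd (Int.gcd r s) b : ℕ)) : ℤ) = 1 then
    ⌊(Nat.gcd (Int.gcd r s) b : ℝ) * x
        - ((dwork (b / Nat.gcd (Int.gcd r s) b) ((r : ℚ) / (s : ℚ)) : ℚ) : ℝ)
        - ((⌊1 - (r : ℚ) / (s : ℚ)⌋ : ℤ) : ℝ) / ((b / Nat.gcd (Int.gcd r s) b : ℕ) : ℝ)⌋ + 1
  else 0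

/-- The Landau-type step function `Δ_b^{𝐫,𝐭}`. -/
def qDeltaFn {v w : ℕ} (b : ℕ) (rr : Fin v → ℤ × ℤ) (tt : Fin w → ℤ × ℤ) (x : ℝ) : ℤ :=
  (∑ i, qdelta b (rr i).1 (rr i).2 x) - (∑ j, qdelta b (tt j).1 (tt j).2 x)

/-- The q-Pochhammer symbol `(q^r; q^s)_n` for `n ∈ ℕ`, inside `ℚ(q)`. -/
def qPoch (r s : ℤ) (n : ℕ) : RatFunc ℚ :=
  ∏ i ∈ Finset.range n, (1 - RatFunc.X ^ (r + s * (i : ℤ)))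

/-- The q-Pochhammer symbol `(q^r; q^s)_n` for `n ∈ ℤ`. -/
def qPochZ (r s : ℤ) (n : ℤ) : RatFunc ℚ :=
  if 0 ≤ n then qPoch r s n.toNat else (qPoch (r - s) (-s) (-n).toNat)⁻¹

/-- Multiplicity of `p` in `g`: the largest `k` with `p^k ∣ g`. -/
def polyMult (p g : Polynomial ℚ) : ℕ := sSup {k : ℕ | p ^ k ∣ g}

/-- The valuation `v_{φ_b}` on `ℚ(q)` attached to the `b`-th cyclotomic polynomial. -/
def cycVal (b : ℕ) (f : RatFunc ℚ) : ℤ :=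
  (polyMult (cyclotomic b ℚ) f.num : ℤ) - (polyMult (cyclotomic b ℚ) f.denom : ℤ)

/-- The image of an integer polynomial in `ℚ(q)`. -/
def polyZ (g : Polynomial ℤ) : RatFunc ℚ :=
  algebraMap (Polynomial ℚ) (RatFunc ℚ) (g.map (Int.castRingHom ℚ))

/-- `f ∈ ℤ[q⁻¹, q]`. -/
def IsIntLaurent (f : RatFunc ℚ) : Prop :=
  ∃ (m : ℕ) (g : Polynomial ℤ), f * RatFunc.X ^ m = polyZ g

/-- `f ∈ ℤ[q]`. -/
def IsIntPoly (f : RatFunc ℚ) : Prop := ∃ g : Polynomial ℤ, f = polyZ g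

/-- The ratio attached to a pair of integers. -/
def ratOf (p : ℤ × ℤ) : ℚ := (p.1 : ℚ) / (p.2 : ℚ)

/-- The q-hypergeometric term `Q_{𝐫,𝐭}(q; n)`, `n ∈ ℕ`. -/
def qHyp {v w : ℕ} (rr : Fin v → ℤ × ℤ) (tt : Fin w → ℤ × ℤ) (n : ℕ) : RatFunc ℚ :=
  (∏ i, qPoch (rr i).1 (rr i).2 n) / (∏ j, qPoch (tt j).1 (tt j).2 n)

/-- The q-hypergeometric term `Q_{𝐫,𝐭}(q; n)`, `n ∈ ℤ`. -/
def qHypZ {v w : ℕ} (rr : Fin v → ℤ × ℤ) (tt : Fin w → ℤ × ℤ) (n : ℤ) : RatFunc ℚ :=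
  (∏ i, qPochZ (rr i).1 (rr i).2 n) / (∏ j, qPochZ (tt j).1 (tt j).2 n)

/-- `c := gcd(r, s, b)`. -/
def cOf (p : ℤ × ℤ) (b : ℕ) : ℕ := Nat.gcd (Int.gcd p.1 p.2) b

/-- Membership in `V_b` (resp. `W_b`): `gcd(s, b) = gcd(r, s, b)`. -/
def inV (p : ℤ × ℤ) (b : ℕ) : Prop := Nat.gcd p.2.natAbs b = cOf p b

/-- `d_{𝐫,𝐭}`: the lcm of all the `s_i` and `u_j`. -/
def dRT {v w : ℕ} (rr : Fin v → ℤ × ℤ) (tt : Fin w → ℤ × ℤ) : ℕ :=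
  Nat.lcm (Finset.univ.lcm fun i => ((rr i).2).natAbs)
    (Finset.univ.lcm fun j => ((tt j).2).natAbs)

/-- `b̃`: the greatest divisor of `b` coprime to `d`. -/
def btilde (d b : ℕ) : ℕ := Nat.findGreatest (fun k => k ∣ b ∧ Nat.Coprime k d) b

/-- The unique `a ∈ {1,…,d}` with `a·b̃ ≡ 1 (mod d)`. -/
def aOf (d b : ℕ) : ℕ :=
  if h : ∃ a, 1 ≤ a ∧ a ≤ d ∧ (a * btilde d b) % d = 1 % d then h.choose else 1

/-- The representative of `b` modulo `d` lying in `{1,…,d}`. -/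
def repMod (d b : ℕ) : ℕ := if b % d = 0 then d else b % d

/-- The jump abscissa `(⟨e·α⟩ + k)/c − ⌊1 − a·α⌋`. -/
def jumpPt (p : ℤ × ℤ) (b : ℕ) (a ei : ℤ) (k : ℕ) : ℝ :=
  (cangle (((ei : ℚ) * ratOf p : ℚ) : ℝ) + (k : ℝ)) / (cOf p b : ℝ)
    - ((⌊1 - (a : ℚ) * ratOf p⌋ : ℤ) : ℝ)

/-- Number of pairs `(i,k)` with jump abscissa `⪯ x` coming from one pair `p`. -/
def XiCount (p : ℤ × ℤ) (b : ℕ) (a ei : ℤ) (x : ℝ) : ℕ :=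
  if inV p b then ((Finset.range (cOf p b)).filter fun k => cle (jumpPt p b a ei k) x).card else 0

/-- The generalized Christol step function `Ξ_{𝐫,𝐭}(b, ·)`, relative to choices `e`, `f`. -/
def Xi {v w : ℕ} (rr : Fin v → ℤ × ℤ) (tt : Fin w → ℤ × ℤ) (b : ℕ)
    (e : Fin v → ℤ) (f : Fin w → ℤ) (x : ℝ) : ℤ :=
  (∑ i, (XiCount (rr i) b ((aOf (dRT rr tt) b : ℕ) : ℤ) (e i) x : ℤ))
    - (∑ j, (XiCount (tt j) b ((aOf (dRT rr tt) b : ℕ) : ℤ) (f j) x : ℤ))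

/-- `ei` is an admissible choice for the pair `p` and `b`: positive with `b·ei ≡ c (mod s)`. -/
def goodChoice (p : ℤ × ℤ) (b : ℕ) (ei : ℤ) : Prop :=
  inV p b → 0 < ei ∧ p.2 ∣ ((b : ℤ) * ei - (cOf p b : ℤ))

end

/-!
The exponent of the cyclotomic polynomial `Φ_b` in `(q^r; q^s)_n` is the number of `i < n` with
`b ∣ r + s i`. Unwinding the Dwork map, `δ_b(r, s, x)` is this same count taken up to
`⌊b x + {-r/s}⌋`, so that `δ_b(r, s, n/b)` is the exponent of `Φ_b` in `(q^r; q^s)_n`. For large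
`b`, two pairs can contribute jumps to the same interval `[n/b, (n+1)/b)` only if their ratios
agree, and then the jumps coincide. Hence the values of `Δ_b` on `ℝ_{≥0}` are exactly the exponents
of `Φ_b` in the terms `Q(q; n)`.

Now `Q(q; n)` is, up to a unit `±q^k`, a product of powers of cyclotomic polynomials with
exponents at least `-w n`. A fixed `C ≠ 0` is divisible by only finitely many `Φ_b`, so it cannot
clear infinitely many denominators; if only the `b < N` cause trouble, `C = ∏_{b < N} Φ_b ^ w`
clears them all.
-/

noncomputable section

section DworkMap

theorem exists_lt_dvd_add_mul {s : ℤ} {b : ℕ} (hb : 0 < b) (hs : IsCoprime s (b : ℤ)) (r : ℤ) :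
    ∃ k : ℕ, k < b ∧ (b : ℤ) ∣ r + s * k := by
  obtain ⟨u, t, hbez⟩ := hs
  obtain ⟨k, hkb, hk⟩ := Int.existsUnique_equiv_nat (-r * u) (b := b) (by exact_mod_cast hb)
  obtain ⟨l, hl⟩ := hk.symm.dvd
  exact ⟨k, by exact_mod_cast hkb, r * t + s * l, by linear_combination s * hl - r * hbez⟩

theorem dwork_spec {b : ℕ} (hb : 0 < b) {α : ℚ} (hα : α.den.Coprime b) :
    (dwork b α).den.Coprime b ∧ ∃ k : ℕ, k < b ∧ (b : ℚ) * dwork b α = α + k := by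
  have hex : ∃ θ : ℚ, Nat.Coprime θ.den b ∧
      ∃ k : ℤ, 0 ≤ k ∧ k < (b : ℤ) ∧ (b : ℚ) * θ - α = (k : ℚ) := by
    obtain ⟨k, hkb, m, hm⟩ :=
      exists_lt_dvd_add_mul hb (Nat.isCoprime_iff_coprime.mpr hα) α.num
    have hden : (Rat.divInt m α.den).den ∣ α.den := by exact_mod_cast Rat.den_dvd m α.den
    refine ⟨Rat.divInt m α.den, hα.coprime_dvd_left hden, k, by simp, by exact_mod_cast hkb, ?_⟩
    have hmQ : (α.num : ℚ) + α.den * k = b * m := by exact_mod_cast hm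
    have hd : (α.den : ℚ) ≠ 0 := by exact_mod_cast α.den_nz
    rw [← Rat.mul_den_eq_num α] at hmQ
    rw [Rat.divInt_eq_div]
    push_cast
    field_simp
    linear_combination -hmQ
  have hchoose : dwork b α = hex.choose := by rw [dwork, dif_pos hex]
  obtain ⟨hcop, k, hk0, hkb, hk⟩ := hex.choose_spec
  rw [← hchoose] at hcop hk
  lift k to ℕ using hk0
  exact ⟨hcop, k, by exact_mod_cast hkb, by exact_mod_cast (sub_eq_iff_eq_add'.mp hk)⟩

theorem dvd_add_mul_of_mul_eq_div_add {b : ℕ} {θ : ℚ} (hθ : θ.den.Coprime b) {r s k : ℤ}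
    (hs : s ≠ 0) (h : (b : ℚ) * θ = (r : ℚ) / s + k) : (b : ℤ) ∣ r + s * k := by
  have hsQ : (s : ℚ) ≠ 0 := by exact_mod_cast hs
  have hnum : (r + s * k) * θ.den = b * (s * θ.num) := by
    suffices ((r : ℚ) + s * k) * θ.den = b * (s * θ.num) by exact_mod_cast this
    rw [← Rat.mul_den_eq_num θ]
    field_simp at h
    linear_combination -(θ.den : ℚ) * h
  exact (Nat.isCoprime_iff_coprime.mpr hθ.symm).dvd_of_dvd_mul_right ⟨_, hnum⟩

end DworkMap

section StepFunction

/-- The exponent of the cyclotomic polynomial `Φ_b` in `(q^r; q^s)_n`: the number of `i < n` with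
`b ∣ r + s i`. -/
def pochOrder (b : ℕ) (r s : ℤ) (n : ℕ) : ℕ :=
  Nat.count (fun i : ℕ => (b : ℤ) ∣ r + s * i) n

theorem pochOrder_mul_left {c : ℕ} (hc : 0 < c) (b : ℕ) (r s : ℤ) (n : ℕ) :
    pochOrder (c * b) (c * r) (c * s) n = pochOrder b r s n := by
  have hcZ : (c : ℤ) ≠ 0 := by exact_mod_cast hc.ne'
  simp_rw [pochOrder, Nat.cast_mul, mul_assoc, ← mul_add, mul_dvd_mul_iff_left hcZ]

theorem pochOrder_le (b : ℕ) (r s : ℤ) (n : ℕ) : pochOrder b r s n ≤ n :=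
  Nat.count_le _

theorem ceil_intCast_div_eq (m : ℤ) {b : ℕ} (hb : 0 < b) : ⌈(m : ℚ) / b⌉ = (m - 1) / b + 1 := by
  have hbQ : (0 : ℚ) < b := by exact_mod_cast hb
  have hlower := Int.ediv_mul_le (m - 1) (b := b) (by omega)
  have hupper := Int.lt_ediv_add_one_mul_self (m - 1) (b := b) (by omega)
  rw [Int.ceil_eq_iff, lt_div_iff₀ hbQ, div_le_iff₀ hbQ]
  refine ⟨?_, by exact_mod_cast Int.le_of_sub_one_lt hupper⟩
  rw [Int.cast_add, Int.cast_one, add_sub_cancel_right]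
  exact_mod_cast Int.lt_of_le_sub_one hlower

theorem pochOrder_eq_ediv {b k : ℕ} {r s : ℤ} (hs : IsCoprime (b : ℤ) s) (hkb : k < b)
    (hk : (b : ℤ) ∣ r + s * k) (n : ℕ) :
    (pochOrder b r s n : ℤ) = ((n : ℤ) - k - 1) / b + 1 := by
  have hiff : ∀ i : ℕ, (b : ℤ) ∣ r + s * i ↔ i ≡ k [MOD b] := fun i => by
    rw [← dvd_sub_left hk, add_sub_add_left_eq_sub, ← mul_sub, Nat.ModEq.comm, Nat.modEq_iff_dvd]
    exact ⟨hs.dvd_of_dvd_mul_left, fun h => h.mul_left s⟩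
  have hb : 0 < b := by omega
  simp_rw [pochOrder, hiff]
  rw [Nat.count_modEq_card_eq_ceil n hb k, Nat.mod_eq_of_lt hkb, ← ceil_intCast_div_eq _ hb]
  push_cast
  rfl

theorem pochOrder_eq_zero_of_not_isCoprime {b : ℕ} {r s : ℤ} (hgcd : Nat.gcd (Int.gcd r s) b = 1)
    (hs : ¬ IsCoprime s (b : ℤ)) (n : ℕ) : pochOrder b r s n = 0 := by
  refine Nat.count_iff_forall_not.mpr fun i _ hi => hs ?_
  have hdvd_s : (Int.gcd s b : ℤ) ∣ s := Int.gcd_dvd_left ..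
  have hdvd_b : (Int.gcd s b : ℤ) ∣ b := Int.gcd_dvd_right ..
  have hdvd_r : (Int.gcd s b : ℤ) ∣ r :=
    (dvd_add_left (hdvd_s.mul_right i)).mp (hdvd_b.trans hi)
  rw [Int.isCoprime_iff_gcd_eq_one, ← Nat.dvd_one, ← hgcd]
  exact Nat.dvd_gcd (Int.dvd_gcd hdvd_r hdvd_s) (by exact_mod_cast hdvd_b)

theorem intCast_mul_div_mul_left {c : ℕ} (hc : 0 < c) (r s : ℤ) :
    ((c * r : ℤ) : ℚ) / (c * s : ℤ) = r / s := by
  have hcQ : (c : ℚ) ≠ 0 := by exact_mod_cast hc.ne'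
  push_cast
  exact mul_div_mul_left _ _ hcQ

theorem qdelta_mul_left {c : ℕ} (hc : 0 < c) (b : ℕ) (r s : ℤ) (x : ℝ) :
    qdelta (c * b) (c * r) (c * s) x = qdelta b r s (c * x) := by
  have hgcd : Nat.gcd (Int.gcd (c * r) (c * s)) (c * b) = c * Nat.gcd (Int.gcd r s) b := by
    rw [Int.gcd_mul_left, Int.natAbs_natCast, Nat.gcd_mul_left]
  have hdiv : c * b / (c * Nat.gcd (Int.gcd r s) b) = b / Nat.gcd (Int.gcd r s) b :=
    Nat.mul_div_mul_left _ _ hc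
  unfold qdelta
  rw [hgcd, hdiv, intCast_mul_div_mul_left hc, Nat.cast_mul, Nat.cast_mul,
    Int.mul_ediv_mul_of_pos _ _ (by omega)]
  split_ifs
  · ring_nf
  · rfl

theorem qdelta_eq_pochOrder_of_gcd_eq_one {b : ℕ} (hb : 0 < b) {r s : ℤ} (hs : s ≠ 0)
    (hgcd : Nat.gcd (Int.gcd r s) b = 1) {x : ℝ} (hx : 0 ≤ x) :
    qdelta b r s x = pochOrder b r s ⌊(b : ℝ) * x + Int.fract (-(r / s : ℚ) : ℝ)⌋₊ := by
  have hbR : (b : ℝ) ≠ 0 := by exact_mod_cast hb.ne'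
  simp only [qdelta, hgcd, Nat.cast_one, Int.ediv_one, Nat.div_one, one_mul,
    ← Int.isCoprime_iff_gcd_eq_one]
  split_ifs with hsb
  swap
  · rw [pochOrder_eq_zero_of_not_isCoprime hgcd hsb, Nat.cast_zero]
  have hden : ((r : ℚ) / s).den.Coprime b := by
    rw [← Rat.divInt_eq_div]
    exact Nat.Coprime.coprime_dvd_left (Int.natCast_dvd.mp (Rat.den_dvd r s))
      (by simpa [Int.gcd] using Int.isCoprime_iff_gcd_eq_one.mp hsb)
  obtain ⟨hcop, k, hkb, hk⟩ := dwork_spec hb hden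
  have hdvd : (b : ℤ) ∣ r + s * k := dvd_add_mul_of_mul_eq_div_add hcop hs (by exact_mod_cast hk)
  have hkR : (b : ℝ) * dwork b (r / s) = (r / s : ℚ) + k := by exact_mod_cast hk
  set y := (b : ℝ) * x + Int.fract (-(r / s : ℚ) : ℝ) with hy
  have hy0 : 0 ≤ y := by positivity
  have hfract : Int.fract (-(r / s : ℚ) : ℝ) = -(r / s : ℚ) + 1 - ⌊1 - (r : ℚ) / s⌋ := by
    rw [← Int.self_sub_floor, sub_eq_neg_add 1, Int.floor_add_one]
    push_cast
    rw [← Rat.floor_cast (α := ℝ)]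
    push_cast
    ring
  have harg : x - dwork b (r / s) - ⌊1 - (r : ℚ) / s⌋ / (b : ℝ) = (y - k - 1) / b := by
    rw [hy, hfract]
    field_simp
    linear_combination -hkR
  rw [harg, Int.floor_div_natCast, Int.floor_sub_one, Int.floor_sub_natCast,
    pochOrder_eq_ediv hsb.symm hkb hdvd, Int.natCast_floor_eq_floor hy0]

theorem qdelta_eq_pochOrder {b : ℕ} (hb : 0 < b) {r s : ℤ} (hs : s ≠ 0) {x : ℝ} (hx : 0 ≤ x) :
    qdelta b r s x = pochOrder b r s ⌊(b : ℝ) * x + Int.fract (-(r / s : ℚ) : ℝ)⌋₊ := by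
  obtain ⟨c, hc⟩ : ∃ c, c = Nat.gcd (Int.gcd r s) b := ⟨_, rfl⟩
  have hc0 : 0 < c := hc ▸ Nat.gcd_pos_of_pos_right _ hb
  have hcrs : (c : ℤ) ∣ Int.gcd r s := by exact_mod_cast hc ▸ Nat.gcd_dvd_left _ _
  obtain ⟨b', rfl⟩ : c ∣ b := hc ▸ Nat.gcd_dvd_right _ _
  obtain ⟨r', rfl⟩ : (c : ℤ) ∣ r := hcrs.trans (Int.gcd_dvd_left ..)
  obtain ⟨s', rfl⟩ : (c : ℤ) ∣ s := hcrs.trans (Int.gcd_dvd_right ..)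
  have hratio : ((c * r' : ℤ) : ℚ) / (c * s' : ℤ) = r' / s' := intCast_mul_div_mul_left hc0 r' s'
  have hgcd : Nat.gcd (Int.gcd r' s') b' = 1 := by
    rw [Int.gcd_mul_left, Int.natAbs_natCast, Nat.gcd_mul_left] at hc
    exact (Nat.eq_of_mul_eq_mul_left hc0 (by rw [mul_one]; exact hc)).symm
  rw [qdelta_mul_left hc0, pochOrder_mul_left hc0, hratio,
    qdelta_eq_pochOrder_of_gcd_eq_one (Nat.pos_of_mul_pos_left hb) (right_ne_zero_of_mul hs) hgcd
      (by positivity)]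
  push_cast
  ring_nf

theorem qdelta_natCast_div {b : ℕ} (hb : 0 < b) {r s : ℤ} (hs : s ≠ 0) (n : ℕ) :
    qdelta b r s ((n : ℝ) / b) = pochOrder b r s n := by
  have hbR : (b : ℝ) ≠ 0 := by exact_mod_cast hb.ne'
  have hfloor : ⌊Int.fract (-(r / s : ℚ) : ℝ)⌋₊ = 0 := Nat.floor_eq_zero.mpr (Int.fract_lt_one _)
  rw [qdelta_eq_pochOrder hb hs (by positivity), mul_div_cancel₀ _ hbR, add_comm,
    Nat.floor_add_natCast (Int.fract_nonneg _), hfloor, zero_add]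

end StepFunction

section Plateaus

open Filter

theorem count_floor_add_eq {R : Type*} [Semiring R] [LinearOrder R] [IsStrictOrderedRing R]
    [FloorSemiring R] {p : ℕ → Prop} [DecidablePred p] {y f : R} (hy : 0 ≤ y) (hf0 : 0 ≤ f)
    (hf1 : f < 1) (hp : ¬ p ⌊y⌋₊) : Nat.count p ⌊y + f⌋₊ = Nat.count p ⌊y⌋₊ := by
  have hle : ⌊y⌋₊ ≤ ⌊y + f⌋₊ := Nat.floor_mono (le_add_of_nonneg_right hf0)
  have hlt : ⌊y + f⌋₊ < ⌊y⌋₊ + 2 := by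
    rw [Nat.floor_lt (by positivity)]
    push_cast
    rw [← one_add_one_eq_two, ← add_assoc]
    exact add_lt_add (Nat.lt_floor_add_one y) hf1
  obtain h | h : ⌊y + f⌋₊ = ⌊y⌋₊ ∨ ⌊y + f⌋₊ = ⌊y⌋₊ + 1 := by omega
  · rw [h]
  · rw [h, Nat.count_succ, if_neg hp, add_zero]

theorem eventually_mul_eq_mul_of_dvd_add_mul (r s t u : ℤ) :
    ∀ᶠ b : ℕ in atTop, ∀ n : ℕ, (b : ℤ) ∣ r + s * n → (b : ℤ) ∣ t + u * n → r * u = t * s := by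
  filter_upwards [eventually_gt_atTop (r * u - t * s).natAbs] with b hb n hrs htu
  have hcomb : r * u - t * s = (r + s * n) * u - (t + u * n) * s := by ring
  have hdvd : (b : ℤ) ∣ r * u - t * s := hcomb ▸ dvd_sub (hrs.mul_right u) (htu.mul_right s)
  exact sub_eq_zero.mp (Int.eq_zero_of_dvd_of_natAbs_lt_natAbs hdvd (by simpa using hb))

theorem eventually_forall_exists_qdelta_eq_pochOrder {ι : Type*} [Finite ι]
    {p : ι → ℤ × ℤ} (hp : ∀ i, (p i).2 ≠ 0) :
    ∀ᶠ b : ℕ in atTop, ∀ x : ℝ, 0 ≤ x →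
      ∃ n : ℕ, ∀ i, qdelta b (p i).1 (p i).2 x = pochOrder b (p i).1 (p i).2 n := by
  have hcross := eventually_all.mpr fun i => eventually_all.mpr fun j =>
    eventually_mul_eq_mul_of_dvd_add_mul (p i).1 (p i).2 (p j).1 (p j).2
  filter_upwards [hcross, eventually_gt_atTop 0] with b hcross hb x hx
  let shift (i : ι) : ℝ := Int.fract (-((p i).1 / (p i).2 : ℚ) : ℝ)
  let IsHit (i : ι) (n : ℕ) : Prop := (b : ℤ) ∣ (p i).1 + (p i).2 * n
  have hbx : 0 ≤ (b : ℝ) * x := by positivity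
  have hqdelta (i : ι) : qdelta b (p i).1 (p i).2 x = Nat.count (IsHit i) ⌊b * x + shift i⌋₊ :=
    qdelta_eq_pochOrder hb (hp i) hx
  have hplateau (i : ι) (f : ℝ) (hf0 : 0 ≤ f) (hf1 : f < 1) (hi : ¬ IsHit i ⌊b * x⌋₊) :
      Nat.count (IsHit i) ⌊b * x + f⌋₊ = Nat.count (IsHit i) ⌊b * x⌋₊ :=
    count_floor_add_eq hbx hf0 hf1 hi
  have hshift (i : ι) : 0 ≤ shift i ∧ shift i < 1 := ⟨Int.fract_nonneg _, Int.fract_lt_one _⟩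
  by_cases hhit : ∃ i, IsHit i ⌊b * x⌋₊
  -- All pairs hit at `⌊b * x⌋₊` have the same shift, and the others ignore the shift.
  · obtain ⟨i, hi⟩ := hhit
    refine ⟨⌊b * x + shift i⌋₊, fun j => ?_⟩
    by_cases hj : IsHit j ⌊b * x⌋₊
    · have hratio : ((p i).1 : ℚ) / (p i).2 = (p j).1 / (p j).2 := by
        rw [div_eq_div_iff (by exact_mod_cast hp i) (by exact_mod_cast hp j)]
        exact_mod_cast hcross i j _ hi hj
      have hij : shift i = shift j := by simp only [shift, hratio]
      rw [hqdelta, hij]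
      rfl
    · rw [hqdelta, hplateau j _ (hshift j).1 (hshift j).2 hj,
        ← hplateau j _ (hshift i).1 (hshift i).2 hj]
      rfl
  · push Not at hhit
    refine ⟨⌊b * x⌋₊, fun j => ?_⟩
    rw [hqdelta, hplateau j _ (hshift j).1 (hshift j).2 (hhit j)]
    rfl

variable {v w : ℕ}

/-- The exponent of the cyclotomic polynomial `Φ_b` in `Q_{𝐫,𝐭}(q; n)`. -/
def qHypOrder (b : ℕ) (rr : Fin v → ℤ × ℤ) (tt : Fin w → ℤ × ℤ) (n : ℕ) : ℤ :=
  ∑ i, (pochOrder b (rr i).1 (rr i).2 n : ℤ) - ∑ j, (pochOrder b (tt j).1 (tt j).2 n : ℤ)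

theorem neg_mul_le_qHypOrder (b : ℕ) (rr : Fin v → ℤ × ℤ) (tt : Fin w → ℤ × ℤ) (n : ℕ) :
    -(w * n : ℤ) ≤ qHypOrder b rr tt n := by
  have hle : ∑ j, (pochOrder b (tt j).1 (tt j).2 n : ℤ) ≤ w * n := by
    simpa using Finset.sum_le_card_nsmul Finset.univ _ (n : ℤ) fun j _ =>
      Nat.cast_le.mpr (pochOrder_le b (tt j).1 (tt j).2 n)
  have hnonneg : 0 ≤ ∑ i, (pochOrder b (rr i).1 (rr i).2 n : ℤ) := by positivity
  rw [qHypOrder]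
  linarith

theorem eventually_qDeltaFn_nonneg_iff {rr : Fin v → ℤ × ℤ} {tt : Fin w → ℤ × ℤ}
    (hrr : ∀ i, (rr i).2 ≠ 0) (htt : ∀ j, (tt j).2 ≠ 0) :
    ∀ᶠ b : ℕ in atTop, (∀ x : ℝ, 0 ≤ x → 0 ≤ qDeltaFn b rr tt x) ↔
      ∀ n, 0 ≤ qHypOrder b rr tt n := by
  have hne : ∀ i, (Sum.elim rr tt i).2 ≠ 0 := Sum.forall.mpr ⟨hrr, htt⟩
  filter_upwards [eventually_forall_exists_qdelta_eq_pochOrder hne, eventually_gt_atTop 0]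
    with b hb hb0
  refine ⟨fun h n => ?_, fun h x hx => ?_⟩
  · have hn := h (n / b) (by positivity)
    simpa only [qHypOrder, qDeltaFn, qdelta_natCast_div hb0 (hrr _),
      qdelta_natCast_div hb0 (htt _)] using hn
  · obtain ⟨n, hn⟩ := hb x hx
    obtain ⟨hnr, hnt⟩ := Sum.forall.mp hn
    simp only [Sum.elim_inl, Sum.elim_inr] at hnr hnt
    simpa only [qHypOrder, qDeltaFn, hnr, hnt] using h n

end Plateaus

section CyclotomicFactorization

open Function IsDedekindDomain WithZero

/-- The inclusion `ℤ[q] → ℚ(q)`, i.e. `polyZ` bundled as a ring homomorphism. -/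
def polyZHom : ℤ[X] →+* RatFunc ℚ :=
  (algebraMap ℚ[X] (RatFunc ℚ)).comp (mapRingHom (Int.castRingHom ℚ))

theorem polyZHom_apply (g : ℤ[X]) : polyZHom g = polyZ g := rfl

theorem polyZHom_X : polyZHom X = RatFunc.X := by simp [polyZHom]

theorem polyZHom_cyclotomic (d : ℕ) :
    polyZHom (cyclotomic d ℤ) = algebraMap ℚ[X] (RatFunc ℚ) (cyclotomic d ℚ) := by
  simp [polyZHom]

theorem polyZHom_cyclotomic_ne_zero (d : ℕ) : polyZHom (cyclotomic d ℤ) ≠ 0 := by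
  rw [polyZHom_cyclotomic]
  exact RatFunc.algebraMap_ne_zero (cyclotomic_ne_zero d ℚ)

theorem isIntLaurent_polyZHom (g : ℤ[X]) : IsIntLaurent (polyZHom g) :=
  ⟨0, g, by simp [polyZHom_apply]⟩

theorem IsIntLaurent.mul {f g : RatFunc ℚ} (hf : IsIntLaurent f) (hg : IsIntLaurent g) :
    IsIntLaurent (f * g) := by
  obtain ⟨m, f', hf'⟩ := hf
  obtain ⟨n, g', hg'⟩ := hg
  refine ⟨m + n, f' * g', ?_⟩
  rw [← polyZHom_apply, map_mul, polyZHom_apply, polyZHom_apply, ← hf', ← hg', pow_add]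
  ring

theorem isIntLaurent_X_zpow (k : ℤ) : IsIntLaurent (RatFunc.X ^ k) := by
  refine ⟨(-k).toNat, X ^ k.toNat, ?_⟩
  rw [← polyZHom_apply, map_pow, polyZHom_X, ← zpow_natCast, ← zpow_natCast,
    ← zpow_add₀ RatFunc.X_ne_zero]
  congr 1
  omega

/-- `f = ± q^k ∏_d Φ_d^{e d}` in `ℚ(q)`, with finitely many nonzero exponents. The value `e 0` is
immaterial, as `cyclotomic 0 = 1`. -/
def HasCyclotomicFactorization (f : RatFunc ℚ) (e : ℕ → ℤ) : Prop :=
  HasFiniteSupport e ∧ ∃ (u : ℤˣ) (k : ℤ),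
    f = ((u : ℤ) : RatFunc ℚ) * RatFunc.X ^ k * ∏ᶠ d, polyZHom (cyclotomic d ℤ) ^ e d

theorem hasFiniteMulSupport_zpow {ι G : Type*} [DivisionMonoid G] (g : ι → G) {e : ι → ℤ}
    (he : HasFiniteSupport e) : HasFiniteMulSupport fun i => g i ^ e i :=
  he.subset fun i hi h0 => hi (by simp [h0])

theorem hasCyclotomicFactorization_units_mul_X_zpow (u : ℤˣ) (k : ℤ) :
    HasCyclotomicFactorization (((u : ℤ) : RatFunc ℚ) * RatFunc.X ^ k) 0 :=
  ⟨by simp [HasFiniteSupport], u, k, by simp⟩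

theorem hasCyclotomicFactorization_cyclotomic (b : ℕ) :
    HasCyclotomicFactorization (polyZHom (cyclotomic b ℤ)) (Pi.single b 1) := by
  refine ⟨(Set.finite_singleton b).subset Pi.support_single_subset, 1, 0, ?_⟩
  rw [finprod_eq_single _ b fun d hd => by simp [hd]]
  simp

namespace HasCyclotomicFactorization

variable {f g : RatFunc ℚ} {e e' : ℕ → ℤ}

theorem mul (hf : HasCyclotomicFactorization f e) (hg : HasCyclotomicFactorization g e') :
    HasCyclotomicFactorization (f * g) (e + e') := by
  obtain ⟨he, u, k, rfl⟩ := hf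
  obtain ⟨he', u', k', rfl⟩ := hg
  refine ⟨he.add he', u * u', k + k', ?_⟩
  simp_rw [Pi.add_apply, fun d => zpow_add₀ (polyZHom_cyclotomic_ne_zero d) (e d) (e' d)]
  rw [finprod_mul_distrib (hasFiniteMulSupport_zpow _ he) (hasFiniteMulSupport_zpow _ he'),
    zpow_add₀ RatFunc.X_ne_zero]
  push_cast
  ring

theorem inv (hf : HasCyclotomicFactorization f e) : HasCyclotomicFactorization f⁻¹ (-e) := by
  obtain ⟨he, u, k, rfl⟩ := hf
  refine ⟨he.neg, u, -k, ?_⟩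
  simp_rw [Pi.neg_apply, zpow_neg, finprod_inv_distrib, mul_inv]
  rcases Int.units_eq_one_or u with rfl | rfl <;> simp

theorem div (hf : HasCyclotomicFactorization f e) (hg : HasCyclotomicFactorization g e') :
    HasCyclotomicFactorization (f / g) (e - e') := by
  simpa only [div_eq_mul_inv, sub_eq_add_neg] using hf.mul hg.inv

theorem prod {ι : Type*} {S : Finset ι} {f : ι → RatFunc ℚ} {e : ι → ℕ → ℤ}
    (h : ∀ i ∈ S, HasCyclotomicFactorization (f i) (e i)) :
    HasCyclotomicFactorization (∏ i ∈ S, f i) (∑ i ∈ S, e i) := by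
  induction S using Finset.induction_on with
  | empty => simpa using hasCyclotomicFactorization_units_mul_X_zpow 1 0
  | insert a S ha ih =>
    rw [Finset.prod_insert ha, Finset.sum_insert ha]
    exact (h a (by simp)).mul (ih fun i hi => h i (by simp [hi]))

theorem pow (hf : HasCyclotomicFactorization f e) (n : ℕ) :
    HasCyclotomicFactorization (f ^ n) (n • e) := by
  simpa using prod (S := Finset.range n) fun _ _ => hf

theorem isIntLaurent (hf : HasCyclotomicFactorization f e) (he : ∀ d, 0 ≤ e d) :
    IsIntLaurent f := by
  obtain ⟨-, u, k, rfl⟩ := hf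
  refine IsIntLaurent.mul (.mul ?_ (isIntLaurent_X_zpow k)) ?_
  · simpa using isIntLaurent_polyZHom (u : ℤ)
  · refine finprod_induction IsIntLaurent ?_ (fun _ _ => .mul) fun d => ?_
    · simpa using isIntLaurent_polyZHom 1
    · rw [← Int.toNat_of_nonneg (he d), zpow_natCast, ← map_pow]
      exact isIntLaurent_polyZHom _

end HasCyclotomicFactorization

theorem hasCyclotomicFactorization_one_sub_X_zpow {m : ℤ} (hm : m ≠ 0) :
    HasCyclotomicFactorization (1 - RatFunc.X ^ m) fun d => if (d : ℤ) ∣ m then 1 else 0 := by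
  have hX : (RatFunc.X : RatFunc ℚ) ^ m ≠ 0 := zpow_ne_zero _ RatFunc.X_ne_zero
  have hprod : (RatFunc.X : RatFunc ℚ) ^ m.natAbs - 1 =
      ∏ d ∈ m.natAbs.divisors, polyZHom (cyclotomic d ℤ) := by
    rw [← map_prod, prod_cyclotomic_eq_X_pow_sub_one (Int.natAbs_pos.mpr hm)]
    simp [polyZHom_X]
  obtain ⟨u, k, huk⟩ : ∃ (u : ℤˣ) (k : ℤ), (1 - RatFunc.X ^ m : RatFunc ℚ) =
      ((u : ℤ) : RatFunc ℚ) * RatFunc.X ^ k * (RatFunc.X ^ m.natAbs - 1) := by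
    rw [← zpow_natCast]
    rcases Int.natAbs_eq m with h | h
    · exact ⟨-1, 0, by simp [← h]⟩
    · refine ⟨1, m, ?_⟩
      rw [← neg_eq_iff_eq_neg.mpr h, zpow_neg]
      simp [mul_sub, hX]
  rw [huk, hprod]
  convert (hasCyclotomicFactorization_units_mul_X_zpow u k).mul
    (.prod fun d _ => hasCyclotomicFactorization_cyclotomic d) using 1
  ext d
  simp [Finset.sum_apply, Pi.single_apply, Int.natCast_dvd, hm]

/-- The place of `ℚ(q)` defined by the cyclotomic polynomial `Φ_b`. -/
def cyclotomicPlace {b : ℕ} (hb : 0 < b) : HeightOneSpectrum ℚ[X] where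
  asIdeal := Ideal.span {cyclotomic b ℚ}
  isPrime := (Ideal.span_singleton_prime (cyclotomic_ne_zero b ℚ)).mpr
    (cyclotomic.irreducible_rat hb).prime
  ne_bot := by
    rw [ne_eq, Ideal.span_singleton_eq_bot]
    exact cyclotomic_ne_zero b ℚ

section Valuation

variable {b : ℕ} (hb : 0 < b)

theorem valuation_cyclotomicPlace_eq_one {g : ℚ[X]} (hg : ¬ cyclotomic b ℚ ∣ g) :
    (cyclotomicPlace hb).valuation (RatFunc ℚ) (algebraMap ℚ[X] (RatFunc ℚ) g) = 1 := by
  rw [HeightOneSpectrum.valuation_eq_one_iff_notMem]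
  rwa [cyclotomicPlace, Ideal.mem_span_singleton]

theorem valuation_cyclotomicPlace_X : (cyclotomicPlace hb).valuation (RatFunc ℚ) RatFunc.X = 1 := by
  rw [← RatFunc.algebraMap_X]
  refine valuation_cyclotomicPlace_eq_one hb fun hX => ?_
  have hone : cyclotomic b ℚ ∣ 1 := by
    rw [← dvd_sub_right (dvd_pow hX hb.ne')]
    exact cyclotomic.dvd_X_pow_sub_one b ℚ
  exact (cyclotomic.irreducible_rat hb).not_dvd_one hone

theorem valuation_cyclotomicPlace_cyclotomic (d : ℕ) :
    (cyclotomicPlace hb).valuation (RatFunc ℚ) (polyZHom (cyclotomic d ℤ)) =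
      if d = b then exp (-1 : ℤ) else 1 := by
  rw [polyZHom_cyclotomic]
  split_ifs with hd
  · rw [hd, HeightOneSpectrum.valuation_of_algebraMap]
    exact HeightOneSpectrum.intValuation_singleton _ (cyclotomic_ne_zero b ℚ) rfl
  · refine valuation_cyclotomicPlace_eq_one hb fun hdvd => ?_
    exact (cyclotomic.irreducible_rat hb).not_isUnit
      ((cyclotomic.isCoprime_rat (Ne.symm hd)).isUnit_of_dvd hdvd)

theorem IsIntLaurent.valuation_le_one {f : RatFunc ℚ} (hf : IsIntLaurent f) :
    (cyclotomicPlace hb).valuation (RatFunc ℚ) f ≤ 1 := by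
  obtain ⟨m, g, hg⟩ := hf
  calc (cyclotomicPlace hb).valuation (RatFunc ℚ) f
      = (cyclotomicPlace hb).valuation (RatFunc ℚ) (f * RatFunc.X ^ m) := by
        rw [map_mul, map_pow, valuation_cyclotomicPlace_X, one_pow, mul_one]
    _ ≤ 1 := hg ▸ HeightOneSpectrum.valuation_le_one _ _

theorem HasCyclotomicFactorization.valuation_eq {f : RatFunc ℚ} {e : ℕ → ℤ}
    (hf : HasCyclotomicFactorization f e) :
    (cyclotomicPlace hb).valuation (RatFunc ℚ) f = exp (-e b) := by
  obtain ⟨he, u, k, rfl⟩ := hf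
  have hu : (cyclotomicPlace hb).valuation (RatFunc ℚ) ((u : ℤ) : RatFunc ℚ) = 1 := by
    rcases Int.units_eq_one_or u with rfl | rfl <;> simp
  rw [map_mul, map_mul, map_zpow₀, hu, valuation_cyclotomicPlace_X, one_zpow, one_mul, one_mul,
    map_finprod _ (hasFiniteMulSupport_zpow _ he)]
  simp_rw [map_zpow₀, valuation_cyclotomicPlace_cyclotomic]
  rw [finprod_eq_single _ b fun d hd => by simp [hd], if_pos rfl, ← exp_zsmul]
  simp

end Valuation

end CyclotomicFactorization

section IntegralityCriterion

open Filter WithZero UniqueFactorizationMonoid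

theorem eventually_not_cyclotomic_dvd {C : ℚ[X]} (hC : C ≠ 0) :
    ∀ᶠ b : ℕ in atTop, ¬ cyclotomic b ℚ ∣ C := by
  have hfin : {b : ℕ | cyclotomic b ℚ ∈ normalizedFactors C}.Finite :=
    (normalizedFactors C).finite_toSet.preimage cyclotomic_injective.injOn
  rw [← Nat.cofinite_eq_atTop]
  filter_upwards [hfin.compl_mem_cofinite, (Set.finite_singleton 0).compl_mem_cofinite]
    with b hb hb0 hdvd
  exact hb ((mem_normalizedFactors_iff' hC).mpr
    ⟨cyclotomic.irreducible_rat (Nat.pos_of_ne_zero hb0), (cyclotomic.monic b ℚ).normalize_eq_self,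
      hdvd⟩)

theorem exists_pow_mul_isIntLaurent_iff {f : ℕ → RatFunc ℚ} {e : ℕ → ℕ → ℤ} {K : ℕ}
    (hf : ∀ n, HasCyclotomicFactorization (f n) (e n)) (hK : ∀ n b : ℕ, -(K * n : ℤ) ≤ e n b) :
    (∃ C : ℤ[X], C ≠ 0 ∧ ∀ n, IsIntLaurent (polyZ C ^ n * f n)) ↔
      ∀ᶠ b in atTop, ∀ n, 0 ≤ e n b := by
  constructor
  · rintro ⟨C, hC, hint⟩
    have hCQ : C.map (Int.castRingHom ℚ) ≠ 0 :=
      (Polynomial.map_ne_zero_iff Int.cast_injective).mpr hC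
    filter_upwards [eventually_not_cyclotomic_dvd hCQ, eventually_gt_atTop 0] with b hb hb0 n
    have hval := (hint n).valuation_le_one hb0
    rw [map_mul, map_pow, polyZ, valuation_cyclotomicPlace_eq_one hb0 hb, one_pow, one_mul,
      (hf n).valuation_eq hb0, ← exp_zero, exp_le_exp] at hval
    omega
  · rw [eventually_atTop]
    rintro ⟨N, hN⟩
    let e₀ : ℕ → ℤ := ∑ d ∈ Finset.range N, Pi.single d 1
    have hfactor : HasCyclotomicFactorization
        (polyZHom (∏ d ∈ Finset.range N, cyclotomic d ℤ)) e₀ := by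
      rw [map_prod]
      exact .prod fun d _ => hasCyclotomicFactorization_cyclotomic d
    have he₀ (d : ℕ) : e₀ d = if d < N then 1 else 0 := by
      simp [e₀, Finset.sum_apply, Pi.single_apply]
    refine ⟨(∏ d ∈ Finset.range N, cyclotomic d ℤ) ^ K,
      pow_ne_zero _ (Finset.prod_ne_zero_iff.mpr fun d _ => cyclotomic_ne_zero d ℤ), fun n => ?_⟩
    rw [← polyZHom_apply, map_pow, ← pow_mul]
    refine ((hfactor.pow (K * n)).mul (hf n)).isIntLaurent fun d => ?_
    have hd : 0 ≤ (K * n : ℤ) + e n d := neg_le_iff_add_nonneg'.mp (hK n d)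
    rw [Pi.add_apply, Pi.smul_apply, he₀]
    split_ifs with hdN
    · simpa using hd
    · simpa using hN d (not_lt.mp hdN) n

theorem hasCyclotomicFactorization_qPoch {r s : ℤ} (hrs : ∀ i : ℕ, r + s * i ≠ 0) (n : ℕ) :
    HasCyclotomicFactorization (qPoch r s n) fun d => pochOrder d r s n := by
  have hexponent : (fun d => (pochOrder d r s n : ℤ)) =
      ∑ i ∈ Finset.range n, fun d : ℕ => if (d : ℤ) ∣ r + s * i then 1 else 0 := by
    ext d
    simp [pochOrder, Nat.count_eq_card_filter_range, Finset.sum_apply]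
  rw [hexponent]
  exact .prod fun i _ => hasCyclotomicFactorization_one_sub_X_zpow (hrs i)

theorem add_mul_ne_zero_of_not_isNonPosInt {p : ℤ × ℤ} (hp : ¬ IsNonPosInt (ratOf p)) (i : ℕ) :
    p.1 + p.2 * i ≠ 0 := by
  contrapose! hp
  by_cases hp2 : p.2 = 0
  · exact ⟨0, le_rfl, by simp [ratOf, hp2]⟩
  · have hp2Q : (p.2 : ℚ) ≠ 0 := by exact_mod_cast hp2
    refine ⟨-i, by simp, ?_⟩
    rw [ratOf, eq_neg_of_add_eq_zero_left hp]
    push_cast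
    field_simp

theorem hasCyclotomicFactorization_qHyp {v w : ℕ} {rr : Fin v → ℤ × ℤ} {tt : Fin w → ℤ × ℤ}
    (hrr : ∀ i, ¬ IsNonPosInt (ratOf (rr i))) (htt : ∀ j, ¬ IsNonPosInt (ratOf (tt j))) (n : ℕ) :
    HasCyclotomicFactorization (qHyp rr tt n) fun b => qHypOrder b rr tt n := by
  have hprod {m : ℕ} {p : Fin m → ℤ × ℤ} (hp : ∀ i, ¬ IsNonPosInt (ratOf (p i))) :=
    HasCyclotomicFactorization.prod (S := Finset.univ) fun i _ =>
      hasCyclotomicFactorization_qPoch (add_mul_ne_zero_of_not_isNonPosInt (hp i)) n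
  have hexponent : (fun b => qHypOrder b rr tt n) =
      (∑ i, fun b => (pochOrder b (rr i).1 (rr i).2 n : ℤ)) -
        ∑ j, fun b => (pochOrder b (tt j).1 (tt j).2 n : ℤ) := by
    ext b
    simp [qHypOrder, Finset.sum_apply]
  rw [hexponent]
  exact (hprod hrr).div (hprod htt)

end IntegralityCriterion

end

/-- Proposition 4.1: a first criterion for Laurent q-integrality. -/
theorem laurent_integrality_criterion {v w : ℕ} (rr : Fin v → ℤ × ℤ) (tt : Fin w → ℤ × ℤ)
    (hs : ∀ i, (rr i).2 ≠ 0) (hu : ∀ j, (tt j).2 ≠ 0)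
    (ht : ∀ j, ¬ IsNonPosInt (ratOf (tt j))) (hr : ∀ i, ¬ IsNonPosInt (ratOf (rr i))) :
    (∃ C : Polynomial ℤ, C ≠ 0 ∧ ∀ n : ℕ, IsIntLaurent (polyZ C ^ n * qHyp rr tt n)) ↔
      (∃ N : ℕ, ∀ b : ℕ, N ≤ b → ∀ x : ℝ, 0 ≤ x → 0 ≤ qDeltaFn b rr tt x) := by
  rw [exists_pow_mul_isIntLaurent_iff (hasCyclotomicFactorization_qHyp hr ht)
    fun n b => neg_mul_le_qHypOrder b rr tt n, ← Filter.eventually_atTop]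
  exact Filter.eventually_congr
    ((eventually_qDeltaFn_nonneg_iff hs hu).mono fun _ => Iff.symm)
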